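/- For every graph H with chromatic number at least 3, φ^R(n,H) = ex(n,H) + o(n²); that is, for every δ > 0 there exists n₀ such that for all n ≥ n₀, ex(n,H) ≤ φ^R(n,H) ≤ ex(n,H) + δn². -/

import Mathlib

namespace RainbowDecomp

variable {V : Type*} {W : Type*}

/-- The number of edges of a graph. -/
noncomputable def eCount (G : SimpleGraph V) : ℕ := G.edgeSet.ncard

/-- `χ` is a proper edge coloring of `G`: any two distinct edges of `G` sharing a vertex
receive distinct colors. -/
def ProperEdgeColoring (G : SimpleGraph V) (χ : Sym2 V → ℕ) : Prop :=
  ∀ ⦃e f : Sym2 V⦄, e ∈ G.edgeSet → f ∈ G.edgeSet → e ≠ f →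
    (∃ v, v ∈ e ∧ v ∈ f) → χ e ≠ χ f

/-- `S` is the edge set of a (sub)copy of `H` in `G`. -/
def IsCopyEdgeSet (H : SimpleGraph W) (G : SimpleGraph V) (S : Set (Sym2 V)) : Prop :=
  ∃ f : W → V, Function.Injective f ∧ (∀ ⦃a b⦄, H.Adj a b → G.Adj (f a) (f b)) ∧
    S = Sym2.map f '' H.edgeSet

/-- `G` contains a subgraph isomorphic to `H`. -/
def ContainsCopy (H : SimpleGraph W) (G : SimpleGraph V) : Prop :=
  ∃ f : W → V, Function.Injective f ∧ ∀ ⦃a b⦄, H.Adj a b → G.Adj (f a) (f b)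

/-- `P` is a partition of the edge set of `G` into `t` (nonempty) parts. -/
def IsEdgePartition (G : SimpleGraph V) {t : ℕ} (P : Fin t → Set (Sym2 V)) : Prop :=
  (∀ i, P i ⊆ G.edgeSet) ∧ ∀ e ∈ G.edgeSet, ∃! i, e ∈ P i

/-- `P` is an `H`-decomposition of `G`: every part is a single edge or the edge set of a
copy of `H`. -/
def IsHDecomp (G : SimpleGraph V) (H : SimpleGraph W) {t : ℕ}
    (P : Fin t → Set (Sym2 V)) : Prop :=
  IsEdgePartition G P ∧ ∀ i, (∃ e, P i = {e}) ∨ IsCopyEdgeSet H G (P i)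

/-- `P` is a rainbow `H`-decomposition of `G` under `χ`: every part is a single edge or
the edge set of a rainbow copy of `H`. -/
def IsRainbowHDecomp (G : SimpleGraph V) (H : SimpleGraph W) (χ : Sym2 V → ℕ) {t : ℕ}
    (P : Fin t → Set (Sym2 V)) : Prop :=
  IsEdgePartition G P ∧
    ∀ i, (∃ e, P i = {e}) ∨ (IsCopyEdgeSet H G (P i) ∧ Set.InjOn χ (P i))

/-- `φ(G,H)`, the minimum number of parts in an `H`-decomposition of `G`. -/
noncomputable def phi (G : SimpleGraph V) (H : SimpleGraph W) : ℕ :=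
  sInf {t | ∃ P : Fin t → Set (Sym2 V), IsHDecomp G H P}

/-- `φ_χ^R(G,H)`, the minimum number of parts in a rainbow `H`-decomposition of `G`
under `χ`. -/
noncomputable def phiR (G : SimpleGraph V) (H : SimpleGraph W) (χ : Sym2 V → ℕ) : ℕ :=
  sInf {t | ∃ P : Fin t → Set (Sym2 V), IsRainbowHDecomp G H χ P}

/-- `N(G,H)`, the maximum number of pairwise edge-disjoint copies of `H` in `G`. -/
noncomputable def Ncopies (G : SimpleGraph V) (H : SimpleGraph W) : ℕ :=
  sSup {k | ∃ C : Fin k → Set (Sym2 V), (∀ i, IsCopyEdgeSet H G (C i)) ∧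
    ∀ i j, i ≠ j → Disjoint (C i) (C j)}

/-- `N_χ^R(G,H)`, the maximum number of pairwise edge-disjoint rainbow copies of `H`
in `G` under `χ`. -/
noncomputable def NcopiesR (G : SimpleGraph V) (H : SimpleGraph W) (χ : Sym2 V → ℕ) : ℕ :=
  sSup {k | ∃ C : Fin k → Set (Sym2 V),
    (∀ i, IsCopyEdgeSet H G (C i) ∧ Set.InjOn χ (C i)) ∧
    ∀ i j, i ≠ j → Disjoint (C i) (C j)}

/-- `ex(n,H)`, the maximum number of edges of an `H`-free graph on `n` vertices. -/
noncomputable def exNum (n : ℕ) (H : SimpleGraph W) : ℕ :=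
  sSup {m | ∃ G : SimpleGraph (Fin n), ¬ ContainsCopy H G ∧ eCount G = m}

/-- `φ^R(n,H)`, the maximum of `φ_χ^R(G,H)` over all graphs `G` on `n` vertices and all
proper edge colorings `χ` of `G`. -/
noncomputable def phiRmax (n : ℕ) (H : SimpleGraph W) : ℕ :=
  sSup {t | ∃ G : SimpleGraph (Fin n), ∃ χ : Sym2 (Fin n) → ℕ,
    ProperEdgeColoring G χ ∧ phiR G H χ = t}

/-- `e(A)`, the number of edges of `G` with both endpoints in `A`. -/
noncomputable def eInside (G : SimpleGraph V) (A : Set V) : ℕ :=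
  {e ∈ G.edgeSet | ∀ v ∈ e, v ∈ A}.ncard

/-- `e(A,B)`, the number of edges of `G` with one endpoint in `A` and one in `B`
(counted as ordered pairs). -/
noncomputable def eBetween (G : SimpleGraph V) (A B : Set V) : ℕ :=
  {p : V × V | p.1 ∈ A ∧ p.2 ∈ B ∧ G.Adj p.1 p.2}.ncard

/-- The edge density `d(A,B)` between `A` and `B`. -/
noncomputable def density (G : SimpleGraph V) (A B : Set V) : ℝ :=
  (eBetween G A B : ℝ) / ((A.ncard : ℝ) * (B.ncard : ℝ))

/-- The pair `(A,B)` is `ε`-regular in `G`. -/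
def IsRegularPair (G : SimpleGraph V) (ε : ℝ) (A B : Set V) : Prop :=
  ∀ A' ⊆ A, ∀ B' ⊆ B, ε * (A.ncard : ℝ) ≤ (A'.ncard : ℝ) →
    ε * (B.ncard : ℝ) ≤ (B'.ncard : ℝ) →
    |density G A' B' - density G A B| ≤ ε

/-- The edges of the (transversal) clique with vertices `g 0, …, g (r-1)`. -/
def transversalEdges {r : ℕ} (g : Fin r → V) : Set (Sym2 V) :=
  {e | ∃ k l : Fin r, k ≠ l ∧ e = s(g k, g l)}

/-- The number of rainbow transversal copies of `K_r` (one vertex in each `Vs l`)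
containing the edge `uv` with `u ∈ Vs i` and `v ∈ Vs j`. -/
noncomputable def rainbowCliqueCount {r : ℕ} (G : SimpleGraph V) (χ : Sym2 V → ℕ)
    (Vs : Fin r → Set V) (i j : Fin r) (u v : V) : ℕ :=
  {g : Fin r → V | (∀ l, g l ∈ Vs l) ∧ (∀ k l, k ≠ l → G.Adj (g k) (g l)) ∧
    g i = u ∧ g j = v ∧ Set.InjOn χ (transversalEdges g)}.ncard

/-- The number of non-rainbow transversal copies of `K_r` (one vertex in each `Vs l`)
containing the edge `uv` with `u ∈ Vs i` and `v ∈ Vs j`. -/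
noncomputable def nonRainbowCliqueCount {r : ℕ} (G : SimpleGraph V) (χ : Sym2 V → ℕ)
    (Vs : Fin r → Set V) (i j : Fin r) (u v : V) : ℕ :=
  {g : Fin r → V | (∀ l, g l ∈ Vs l) ∧ (∀ k l, k ≠ l → G.Adj (g k) (g l)) ∧
    g i = u ∧ g j = v ∧ ¬ Set.InjOn χ (transversalEdges g)}.ncard

/-- The edge set of the clique on the vertex set `K`. -/
def cliqueEdges (K : Finset V) : Set (Sym2 V) :=
  {e | ∃ u ∈ K, ∃ v ∈ K, u ≠ v ∧ e = s(u, v)}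

open scoped Classical in
/-- The probability of the event `A` under the random subgraph of `G` in which every
edge `e` is retained independently with probability `q e`. -/
noncomputable def edgeSubsetProb [Fintype V] (G : SimpleGraph V) (q : Sym2 V → ℝ)
    (A : Set (Finset (Sym2 V))) : ℝ :=
  ∑ E' ∈ (Set.toFinite G.edgeSet).toFinset.powerset,
    (∏ e ∈ E', q e) * (∏ e ∈ (Set.toFinite G.edgeSet).toFinset \ E', (1 - q e)) *
      A.indicator (fun _ => (1 : ℝ)) E'

section Box

open Finset

theorem pow_mul_card_le_sum_pow {ι : Type*} (s : Finset ι) (f : ι → ℝ) (a : ℝ) (T : ℕ)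
    (hf : ∀ i ∈ s, 0 ≤ f i) (ha : 0 ≤ a) (h : a * #s ≤ ∑ i ∈ s, f i) :
    a ^ T * #s ≤ ∑ i ∈ s, f i ^ T := by
  rcases T with _ | T
  · simp
  rcases s.eq_empty_or_nonempty with rfl | hs
  · simp
  have hs' : (0 : ℝ) < #s := by exact_mod_cast hs.card_pos
  refine le_trans ?_ (pow_sum_div_card_le_sum_pow hf T)
  rw [le_div_iff₀ (by positivity)]
  calc a ^ (T + 1) * #s * (#s : ℝ) ^ T = (a * #s) ^ (T + 1) := by ring
    _ ≤ _ := by gcongr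

open scoped Classical in
/-- Every dense subset of a product of `k` large finite sets contains a box all of whose sides
have size `T`. -/
theorem exists_box_subset (k T : ℕ) (c : ℝ) (hc : 0 < c) : ∃ N : ℕ,
    ∀ {V : Type} (Y : Fin k → Finset V) (D : Finset (Fin k → V)),
      (∀ i, N ≤ #(Y i)) → D ⊆ Fintype.piFinset Y → c * ∏ i, (#(Y i) : ℝ) ≤ #D →
      ∃ X : Fin k → Finset V, (∀ i, X i ⊆ Y i ∧ #(X i) = T) ∧ Fintype.piFinset X ⊆ D := by
  induction k generalizing c with
  | zero =>
    refine ⟨0, fun {V} Y D _ hD hcard ↦ ⟨fun _ ↦ ∅, fun i ↦ i.elim0, fun x _ ↦ ?_⟩⟩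
    have : (0 : ℝ) < #D := lt_of_lt_of_le (by simpa using hc) hcard
    obtain ⟨z, hz⟩ := card_pos.1 (by exact_mod_cast this)
    rwa [Subsingleton.elim x z]
  | succ k ih =>
    obtain ⟨N, hN⟩ := ih ((c / 2) ^ T) (by positivity)
    refine ⟨max (max N T) ⌈2 * T / c⌉₊, fun {V} Y D hY hD hcard ↦ ?_⟩
    set P : Finset (Fin k → V) := Fintype.piFinset (Fin.tail Y) with hP
    have hPcard : (#P : ℝ) = ∏ i : Fin k, (#(Y i.succ) : ℝ) := by
      simp [hP, Fintype.card_piFinset, Fin.tail]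
    have hyT : T ≤ #(Y 0) := le_trans (by simp) (hY 0)
    have hyc : (2 * T / c : ℝ) ≤ #(Y 0) :=
      (Nat.le_ceil _).trans (by exact_mod_cast (le_max_right _ _).trans (hY 0))
    rw [div_le_iff₀ hc] at hyc
    set fib : (Fin k → V) → Finset V := fun x ↦ {a ∈ Y 0 | (Fin.cons a x : Fin (k + 1) → V) ∈ D}
      with hfib
    have hDsum : #D ≤ ∑ x ∈ P, #(fib x) := by
      rw [card_eq_sum_card_fiberwise (f := Fin.tail) (t := P)]
      · refine sum_le_sum fun x _ ↦ card_le_card_of_injOn (fun t ↦ t 0) ?_ ?_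
        · intro t ht
          simp only [mem_coe, mem_filter] at ht
          simp only [hfib, mem_coe, mem_filter]
          refine ⟨Fintype.mem_piFinset.1 (hD ht.1) 0, ?_⟩
          rw [← ht.2, Fin.cons_self_tail]
          exact ht.1
        · intro t ht t' ht' h
          simp only [mem_coe, mem_filter] at ht ht'
          rw [← Fin.cons_self_tail t, ← Fin.cons_self_tail t', ht.2, ht'.2]
          simp only at h
          rw [h]
      · intro t ht
        exact mem_coe.2 (Fintype.mem_piFinset.2 fun i ↦ Fintype.mem_piFinset.1 (hD ht) i.succ)
    have hmean : (c / 2 * #(Y 0)) ^ T * #P ≤ ∑ x ∈ P, ((#(fib x) + 1 - T : ℕ) : ℝ) ^ T := by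
      refine pow_mul_card_le_sum_pow _ _ _ _ (fun _ _ ↦ by positivity) (by positivity) ?_
      have h1 : ∑ x ∈ P, ((#(fib x) : ℝ) - T) ≤ ∑ x ∈ P, ((#(fib x) + 1 - T : ℕ) : ℝ) := by
        refine sum_le_sum fun x _ ↦ ?_
        have : #(fib x) ≤ (#(fib x) + 1 - T) + T := by omega
        have : (#(fib x) : ℝ) ≤ ((#(fib x) + 1 - T : ℕ) : ℝ) + T := by exact_mod_cast this
        linarith
      rw [sum_sub_distrib, sum_const, nsmul_eq_mul] at h1
      have h2 : (#D : ℝ) ≤ ∑ x ∈ P, (#(fib x) : ℝ) := by exact_mod_cast hDsum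
      rw [Fin.prod_univ_succ, ← hPcard] at hcard
      nlinarith [(Nat.cast_nonneg #P : (0 : ℝ) ≤ #P)]
    have hchoose : (c / 2 * #(Y 0)) ^ T * #P ≤
        T.factorial * ∑ x ∈ P, (#(powersetCard T (fib x)) : ℝ) := by
      refine hmean.trans ?_
      rw [mul_sum]
      refine sum_le_sum fun x _ ↦ ?_
      rw [card_powersetCard]
      exact_mod_cast (Nat.pow_sub_le_descFactorial _ _).trans
        (Nat.descFactorial_eq_factorial_mul_choose _ _).le
    have hdouble : ∑ x ∈ P, #(powersetCard T (fib x)) =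
        ∑ Z ∈ powersetCard T (Y 0), #{x ∈ P | Z ⊆ fib x} := by
      refine Eq.trans (sum_congr rfl fun x _ ↦ congrArg card ?_)
        (sum_card_bipartiteAbove_eq_sum_card_bipartiteBelow (fun x Z ↦ Z ⊆ fib x))
      ext Z
      simp only [bipartiteAbove, mem_filter, mem_powersetCard]
      exact ⟨fun h ↦ ⟨⟨h.1.trans (filter_subset _ _), h.2⟩, h.1⟩, fun h ↦ ⟨h.2, h.1.2⟩⟩
    obtain ⟨Z, hZ, hZcard⟩ : ∃ Z ∈ powersetCard T (Y 0),
        (c / 2) ^ T * #P ≤ (#{x ∈ P | Z ⊆ fib x} : ℝ) := by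
      refine exists_le_of_sum_le (powersetCard_nonempty.2 hyT) ?_
      rw [sum_const, nsmul_eq_mul, card_powersetCard]
      have hT : (0 : ℝ) < T.factorial := by positivity
      refine le_of_mul_le_mul_left ?_ hT
      have hd : (∑ Z ∈ powersetCard T (Y 0), (#{x ∈ P | Z ⊆ fib x} : ℝ)) =
          ∑ x ∈ P, (#(powersetCard T (fib x)) : ℝ) := by exact_mod_cast hdouble.symm
      rw [hd]
      refine le_trans ?_ hchoose
      have hle : (T.factorial * (#(Y 0)).choose T : ℝ) ≤ (#(Y 0) : ℝ) ^ T := by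
        exact_mod_cast (Nat.descFactorial_eq_factorial_mul_choose _ _).ge.trans
          (Nat.descFactorial_le_pow _ _)
      calc (T.factorial : ℝ) * ((#(Y 0)).choose T * ((c / 2) ^ T * #P))
          = (T.factorial * (#(Y 0)).choose T) * ((c / 2) ^ T * #P) := by ring
        _ ≤ (#(Y 0) : ℝ) ^ T * ((c / 2) ^ T * #P) := by gcongr
        _ = _ := by ring
    rw [mem_powersetCard] at hZ
    obtain ⟨X, hX, hXD⟩ := hN (Fin.tail Y) {x ∈ P | Z ⊆ fib x}
      (fun i ↦ le_trans (by simp) (hY i.succ)) (filter_subset _ _)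
      (by rw [hPcard] at hZcard; exact hZcard)
    refine ⟨Fin.cons Z X, Fin.cases hZ hX, fun t ht ↦ ?_⟩
    have h0 : t 0 ∈ Z := Fintype.mem_piFinset.1 ht 0
    have h1 : Fin.tail t ∈ Fintype.piFinset X :=
      Fintype.mem_piFinset.2 fun i ↦ Fintype.mem_piFinset.1 ht i.succ
    have h2 := (mem_filter.1 ((mem_filter.1 (hXD h1)).2 h0)).2
    rwa [Fin.cons_self_tail] at h2

end Box

section Packing

open Finset

/-- A family of pairwise edge-disjoint rainbow copies of `H` in `G`. -/
def IsRainbowPacking (H : SimpleGraph W) (G : SimpleGraph V) (χ : Sym2 V → ℕ)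
    (𝒜 : Finset (Finset (Sym2 V))) : Prop :=
  (∀ P ∈ 𝒜, IsCopyEdgeSet H G (P : Set (Sym2 V)) ∧ Set.InjOn χ (P : Set (Sym2 V))) ∧
    (𝒜 : Set (Finset (Sym2 V))).PairwiseDisjoint id

/-- The edges of `G` not covered by the family `𝒜`. -/
def uncovered (G : SimpleGraph V) (𝒜 : Finset (Finset (Sym2 V))) : Set (Sym2 V) :=
  {e ∈ G.edgeSet | ∀ P ∈ 𝒜, e ∉ P}

theorem IsCopyEdgeSet.subset {H : SimpleGraph W} {G : SimpleGraph V} {S : Set (Sym2 V)}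
    (h : IsCopyEdgeSet H G S) : S ⊆ G.edgeSet := by
  obtain ⟨f, -, hf, rfl⟩ := h
  rintro _ ⟨e, he, rfl⟩
  induction e with
  | _ a b => exact hf he

theorem IsCopyEdgeSet.mono {H : SimpleGraph W} {G G' : SimpleGraph V} {S : Set (Sym2 V)}
    (h : IsCopyEdgeSet H G S) (hG : G ≤ G') : IsCopyEdgeSet H G' S := by
  obtain ⟨f, hi, hf, rfl⟩ := h
  exact ⟨f, hi, fun a b hab ↦ hG (hf hab), rfl⟩

theorem IsCopyEdgeSet.containsCopy {H : SimpleGraph W} {G : SimpleGraph V} {S : Set (Sym2 V)}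
    (h : IsCopyEdgeSet H G S) : ContainsCopy H G := by
  obtain ⟨f, hi, hf, -⟩ := h
  exact ⟨f, hi, hf⟩

theorem phiR_le_card {ι : Type*} [Fintype ι] {H : SimpleGraph W} {G : SimpleGraph V}
    {χ : Sym2 V → ℕ} (Q : ι → Set (Sym2 V)) (hsub : ∀ i, Q i ⊆ G.edgeSet)
    (huniq : ∀ e ∈ G.edgeSet, ∃! i, e ∈ Q i)
    (hQ : ∀ i, (∃ e, Q i = {e}) ∨ (IsCopyEdgeSet H G (Q i) ∧ Set.InjOn χ (Q i))) :
    phiR G H χ ≤ Fintype.card ι := by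
  refine Nat.sInf_le ⟨Q ∘ (Fintype.equivFin ι).symm, ⟨fun i ↦ hsub _, fun e he ↦ ?_⟩,
    fun i ↦ hQ _⟩
  obtain ⟨i, hi, hi'⟩ := huniq e he
  refine ⟨Fintype.equivFin ι i, by simpa using hi, fun j hj ↦ ?_⟩
  rw [← hi' _ hj, Equiv.apply_symm_apply]

theorem phiR_le_of_isRainbowPacking [Finite V] {H : SimpleGraph W} {G : SimpleGraph V}
    {χ : Sym2 V → ℕ} {𝒜 : Finset (Finset (Sym2 V))} (h𝒜 : IsRainbowPacking H G χ 𝒜) :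
    phiR G H χ ≤ #𝒜 + (uncovered G 𝒜).ncard := by
  classical
  have := Fintype.ofFinite (uncovered G 𝒜)
  have hcard : Fintype.card ({P // P ∈ 𝒜} ⊕ uncovered G 𝒜) =
      #𝒜 + (uncovered G 𝒜).ncard := by
    rw [Fintype.card_sum, Fintype.card_coe, ← Nat.card_eq_fintype_card, Nat.card_coe_set_eq]
  rw [← hcard]
  refine phiR_le_card (Sum.elim (fun P ↦ (P.1 : Set (Sym2 V))) fun e ↦ {e.1}) ?_ ?_ ?_
  · rintro (P | e)
    · exact (h𝒜.1 P P.2).1.subset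
    · simpa using e.2.1
  · intro e he
    by_cases hc : ∃ P ∈ 𝒜, e ∈ P
    · obtain ⟨P, hP, heP⟩ := hc
      refine ⟨Sum.inl ⟨P, hP⟩, heP, ?_⟩
      rintro (P' | e') h
      · by_contra hne
        have hd : Disjoint P'.1 P := h𝒜.2 P'.2 hP fun h' ↦ hne (by simp [← h'])
        exact disjoint_left.1 hd h heP
      · simp only [Sum.elim_inr, Set.mem_singleton_iff] at h
        exact absurd heP (h ▸ e'.2.2 P hP)
    · push Not at hc
      refine ⟨Sum.inr ⟨e, he, hc⟩, rfl, ?_⟩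
      rintro (P' | e') h
      · exact absurd h (hc P' P'.2)
      · simp only [Sum.elim_inr, Set.mem_singleton_iff] at h
        exact congrArg Sum.inr (Subtype.ext h.symm)
  · rintro (P | e)
    · exact Or.inr (h𝒜.1 P P.2)
    · exact Or.inl ⟨e.1, rfl⟩

theorem isRainbowPacking_empty (H : SimpleGraph W) (G : SimpleGraph V) (χ : Sym2 V → ℕ) :
    IsRainbowPacking H G χ ∅ := by
  simp [IsRainbowPacking]

theorem phiR_le_eCount [Finite V] (G : SimpleGraph V) (H : SimpleGraph W) (χ : Sym2 V → ℕ) :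
    phiR G H χ ≤ eCount G := by
  simpa [uncovered, eCount] using phiR_le_of_isRainbowPacking (isRainbowPacking_empty H G χ)

theorem eCount_le_card [Fintype V] (G : SimpleGraph V) : eCount G ≤ Nat.card (Sym2 V) :=
  Set.ncard_le_card _

/-- In a graph without copies of `H` every decomposition consists of single edges. -/
theorem eCount_le_phiR [Finite V] {G : SimpleGraph V} {H : SimpleGraph W} (χ : Sym2 V → ℕ)
    (hG : ¬ ContainsCopy H G) : eCount G ≤ phiR G H χ := by
  classical
  have hne : {t | ∃ P : Fin t → Set (Sym2 V), IsRainbowHDecomp G H χ P}.Nonempty := by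
    have := Fintype.ofFinite G.edgeSet
    refine ⟨_, fun i ↦ {((Fintype.equivFin G.edgeSet).symm i).1}, ⟨fun i ↦ by simp, ?_⟩,
      fun i ↦ Or.inl ⟨_, rfl⟩⟩
    intro e he
    refine ⟨Fintype.equivFin G.edgeSet ⟨e, he⟩, by simp, fun j hj ↦ ?_⟩
    have hj' : e = ((Fintype.equivFin G.edgeSet).symm j).1 := hj
    simp [hj']
  obtain ⟨P, ⟨hsub, huniq⟩, hP⟩ := Nat.sInf_mem hne
  have hs : ∀ i, ∃ e, P i = {e} := fun i ↦
    (hP i).resolve_right fun h ↦ hG h.1.containsCopy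
  choose e he using hs
  have hcov : G.edgeSet ⊆ Set.range e := by
    intro x hx
    obtain ⟨i, hi, -⟩ := huniq x hx
    exact ⟨i, by simpa [he, eq_comm] using hi⟩
  calc eCount G ≤ (Set.range e).ncard := Set.ncard_le_ncard hcov (Set.finite_range e)
    _ ≤ _ := by
      rw [← Set.image_univ]
      refine (Set.ncard_image_le).trans ?_
      simp [Set.ncard_univ, phiR]

theorem exNum_le_phiRmax (n : ℕ) (H : SimpleGraph W) (hH : H ≠ ⊥) :
    exNum n H ≤ phiRmax n H := by
  have hbdd : BddAbove {t | ∃ G : SimpleGraph (Fin n), ∃ χ : Sym2 (Fin n) → ℕ,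
      ProperEdgeColoring G χ ∧ phiR G H χ = t} := by
    refine ⟨Nat.card (Sym2 (Fin n)), ?_⟩
    rintro _ ⟨G, χ, -, rfl⟩
    exact (phiR_le_eCount G H χ).trans (eCount_le_card G)
  obtain ⟨G, hG, hGe⟩ : exNum n H ∈
      {m | ∃ G : SimpleGraph (Fin n), ¬ ContainsCopy H G ∧ eCount G = m} := by
    refine Nat.sSup_mem ⟨_, ⊥, ?_, rfl⟩ ⟨Nat.card (Sym2 (Fin n)), ?_⟩
    · rintro ⟨f, -, hf⟩
      exact hH (eq_bot_iff.2 fun a b hab ↦ hf hab)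
    · rintro _ ⟨G, -, rfl⟩
      exact eCount_le_card G
  obtain ⟨χ, hχ⟩ := Countable.exists_injective_nat (Sym2 (Fin n))
  rw [← hGe]
  exact (eCount_le_phiR χ hG).trans
    (le_csSup hbdd ⟨G, χ, fun e f _ _ hne _ h ↦ hne (hχ h), rfl⟩)

theorem exists_phiR_eq_phiRmax (n : ℕ) (H : SimpleGraph W) :
    ∃ G : SimpleGraph (Fin n), ∃ χ : Sym2 (Fin n) → ℕ,
      ProperEdgeColoring G χ ∧ phiR G H χ = phiRmax n H := by
  refine Nat.sSup_mem (s := {t | ∃ G : SimpleGraph (Fin n), ∃ χ : Sym2 (Fin n) → ℕ,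
      ProperEdgeColoring G χ ∧ phiR G H χ = t}) ⟨_, ⊥, fun _ ↦ 0, ?_, rfl⟩
      ⟨Nat.card (Sym2 (Fin n)), ?_⟩
  · intro e f he
    simp at he
  · rintro _ ⟨G, χ, -, rfl⟩
    exact (phiR_le_eCount G H χ).trans (eCount_le_card G)

theorem eCount_le_exNum {n : ℕ} {H : SimpleGraph W} {G : SimpleGraph (Fin n)}
    (hG : ¬ ContainsCopy H G) : eCount G ≤ exNum n H := by
  refine le_csSup ⟨Nat.card (Sym2 (Fin n)), ?_⟩ ⟨G, hG, rfl⟩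
  rintro _ ⟨G, -, rfl⟩
  exact eCount_le_card G

theorem turan_le_exNum {H : SimpleGraph W} (k : ℕ) (hH : ¬ H.Colorable (k + 1)) (n : ℕ) :
    (k / (k + 1) : ℝ) * n ^ 2 / 2 - (k + 1) ^ 2 ≤ exNum n H := by
  have hG : ¬ ContainsCopy H (SimpleGraph.turanGraph n (k + 1)) := by
    rintro ⟨f, -, hf⟩
    refine hH ⟨⟨fun w ↦ ⟨(f w : ℕ) % (k + 1), Nat.mod_lt _ k.succ_pos⟩, fun {a b} hab h ↦ ?_⟩⟩
    exact hf hab (Fin.ext_iff.1 h)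
  have h := eCount_le_exNum hG
  rw [eCount, Set.ncard_eq_toFinset_card', ← SimpleGraph.edgeFinset,
    SimpleGraph.card_edgeFinset_turanGraph] at h
  have h1 : (n ^ 2 - (n % (k + 1)) ^ 2) * k < 2 * (k + 1) * (exNum n H + 1) := by
    have := Nat.lt_mul_div_succ ((n ^ 2 - (n % (k + 1)) ^ 2) * k)
      (show 0 < 2 * (k + 1) by positivity)
    refine this.trans_le (Nat.mul_le_mul_left _ ?_)
    simp only [Nat.add_sub_cancel] at h
    omega
  have h2 : n % (k + 1) < k + 1 := Nat.mod_lt _ k.succ_pos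
  have h3 : n ^ 2 ≤ (n ^ 2 - (n % (k + 1)) ^ 2) + k ^ 2 := by
    have : (n % (k + 1)) ^ 2 ≤ k ^ 2 := Nat.pow_le_pow_left (by omega) 2
    omega
  have h4 : n ^ 2 * k ≤ 2 * (k + 1) * (exNum n H + 1) + k ^ 2 * k := by
    nlinarith
  have h5 : (n : ℝ) ^ 2 * k ≤ 2 * (k + 1) * (exNum n H + 1) + k ^ 2 * k := by
    exact_mod_cast h4
  rw [div_mul_eq_mul_div, div_div, sub_le_iff_le_add, div_le_iff₀ (by positivity)]
  have : (0 : ℝ) ≤ k := by positivity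
  nlinarith [pow_nonneg this 2, pow_nonneg this 3]

end Packing

section Embedding

open Finset

theorem exists_adj_zero_of_not_colorable {H : SimpleGraph W} {k : ℕ}
    (hH : ¬ H.Colorable (k + 1)) (c : H.Coloring (Fin (k + 2))) {j : Fin (k + 2)} (hj : j ≠ 0) :
    ∃ u v, H.Adj u v ∧ c u = 0 ∧ c v = j := by
  classical
  by_contra! hno
  let c' : H.Coloring {x : Fin (k + 2) // x ≠ j} :=
    ⟨fun w ↦ if h : c w = j then ⟨0, hj.symm⟩ else ⟨c w, h⟩, fun {a b} hab h ↦ by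
      have hv := c.valid hab
      by_cases ha : c a = j <;> by_cases hb : c b = j
      · exact hv (ha.trans hb.symm)
      · simp only [ha, hb, dite_true, dite_false, Subtype.mk.injEq] at h
        exact hno b a hab.symm h.symm ha
      · simp only [ha, hb, dite_true, dite_false, Subtype.mk.injEq] at h
        exact hno a b hab h hb
      · simp only [ha, hb, dite_false, Subtype.mk.injEq] at h
        exact hv h⟩
  refine hH ?_
  have := c'.colorable
  simpa [Fintype.card_subtype_compl] using this

/-- A blow-up of a complete graph with large parts contains rainbow copies of `H` respecting
a given proper vertex coloring of `H`. -/
theorem exists_rainbow_embedding [Fintype W] {ι : Type*} {H : SimpleGraph W}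
    (c : H.Coloring ι) {G : SimpleGraph V} {χ : Sym2 V → ℕ} (hχ : ProperEdgeColoring G χ)
    (X : ι → Finset V) (hX : ∀ i, Fintype.card W + Fintype.card W ^ 3 < #(X i))
    (hG : ∀ i j, i ≠ j → ∀ x ∈ X i, ∀ y ∈ X j, G.Adj x y) :
    ∃ f : W → V, Function.Injective f ∧ (∀ w, f w ∈ X (c w)) ∧
      Set.InjOn χ (Sym2.map f '' H.edgeSet) := by
  classical
  suffices h : ∀ U : Finset W, ∃ f : W → V, Set.InjOn f U ∧ (∀ w, f w ∈ X (c w)) ∧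
      Set.InjOn (χ ∘ Sym2.map f) {e ∈ H.edgeSet | ∀ v ∈ e, v ∈ U} by
    obtain ⟨f, hf, hfX, hfχ⟩ := h univ
    refine ⟨f, fun a b h ↦ hf (by simp) (by simp) h, hfX, ?_⟩
    rintro _ ⟨e, he, rfl⟩ _ ⟨e', he', rfl⟩ h
    rw [hfχ ⟨he, by simp⟩ ⟨he', by simp⟩ h]
  intro U
  induction U using Finset.induction_on with
  | empty =>
    have hne : ∀ i, (X i).Nonempty := fun i ↦ card_pos.1 (by have := hX i; omega)
    choose g hg using hne
    refine ⟨fun w ↦ g (c w), by simp, fun w ↦ hg _, ?_⟩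
    rintro e ⟨-, he⟩
    exact absurd (he _ e.out_fst_mem) (by simp)
  | insert w₀ U hw₀ ih =>
    obtain ⟨f, hf, hfX, hfχ⟩ := ih
    have hGe : ∀ {a b}, H.Adj a b → ∀ z ∈ X (c a), G.Adj z (f b) := fun hab z hz ↦
      hG _ _ (c.valid hab) _ hz _ (hfX _)
    set bad : W × W × W → Finset V := fun p ↦ {z ∈ X (c w₀) | H.Adj w₀ p.1 ∧
      χ s(z, f p.1) = χ s(f p.2.1, f p.2.2)} with hbad
    have hbad1 : ∀ p, #(bad p) ≤ 1 := by
      intro p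
      rw [card_le_one]
      intro z hz z' hz'
      simp only [hbad, mem_filter] at hz hz'
      by_contra hne
      refine hχ (hGe hz.2.1 z hz.1) (hGe hz.2.1 z' hz'.1) ?_ ⟨f p.1, by simp, by simp⟩
        (hz.2.2.trans hz'.2.2.symm)
      rwa [Ne, Sym2.congr_left]
    obtain ⟨z, hz, hzU⟩ : ∃ z ∈ X (c w₀), z ∉ U.image f ∪ (univ.biUnion bad) := by
      by_contra! hsub
      have h1 := card_le_card (show X (c w₀) ⊆ _ from hsub)
      have h2 : #(U.image f ∪ univ.biUnion bad) ≤ Fintype.card W + Fintype.card W ^ 3 := by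
        refine (card_union_le _ _).trans (add_le_add (card_image_le.trans (card_le_univ _)) ?_)
        refine (card_biUnion_le_card_mul _ _ 1 fun p _ ↦ hbad1 p).trans (le_of_eq ?_)
        simp only [card_univ, Fintype.card_prod]
        ring
      exact absurd (hX (c w₀)) (by omega)
    simp only [mem_union, mem_image, mem_biUnion, mem_univ, true_and, not_or, not_exists,
      not_and, hbad, mem_filter, Prod.forall] at hzU
    obtain ⟨hzf, hzb⟩ := hzU
    have hup : ∀ u ∈ U, Function.update f w₀ z u = f u := fun u hu ↦
      Function.update_of_ne (fun h : u = w₀ ↦ hw₀ (h ▸ hu)) _ _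
    have hw : Function.update f w₀ z w₀ = z := Function.update_self ..
    have hedge : ∀ e ∈ H.edgeSet, (∀ v ∈ e, v ∈ insert w₀ U) →
        (∀ v ∈ e, v ∈ U) ∨ ∃ u ∈ U, H.Adj w₀ u ∧ e = s(w₀, u) := by
      intro e he hv
      induction e with
      | _ a b =>
        have hab : H.Adj a b := he
        simp only [Sym2.mem_iff, forall_eq_or_imp, forall_eq, mem_insert] at hv ⊢
        rcases hv with ⟨rfl | ha, rfl | hb⟩
        · exact absurd hab (H.loopless.irrefl _)
        · exact Or.inr ⟨b, hb, hab, rfl⟩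
        · exact Or.inr ⟨a, ha, hab.symm, Sym2.eq_swap⟩
        · exact Or.inl ⟨ha, hb⟩
    have hmap : ∀ e : Sym2 W, (∀ v ∈ e, v ∈ U) →
        Sym2.map (Function.update f w₀ z) e = Sym2.map f e := fun e he ↦
      Sym2.map_congr fun v hv ↦ hup v (he v hv)
    have hmix : ∀ u ∈ U, H.Adj w₀ u → ∀ e : Sym2 W, χ s(z, f u) ≠ χ (Sym2.map f e) := by
      intro u _ hu e
      induction e with
      | _ a b => exact hzb u a b hz hu
    refine ⟨Function.update f w₀ z, ?_, fun w ↦ ?_, ?_⟩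
    · rw [coe_insert, Set.injOn_insert (by simpa using hw₀)]
      refine ⟨fun a ha b hb h ↦ hf ha hb (by rwa [hup a ha, hup b hb] at h), ?_⟩
      rintro ⟨u, hu, h⟩
      rw [hw, hup u hu] at h
      exact hzf u hu h
    · by_cases h : w = w₀
      · subst h
        rwa [hw]
      · rw [Function.update_of_ne h]
        exact hfX w
    · rintro e ⟨he, heU⟩ e' ⟨he', heU'⟩ h
      simp only [Function.comp_apply] at h
      rcases hedge e he heU with h1 | ⟨u, hu, hadj, rfl⟩ <;>
        rcases hedge e' he' heU' with h2 | ⟨u', hu', hadj', rfl⟩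
      · rw [hmap e h1, hmap e' h2] at h
        exact hfχ ⟨he, h1⟩ ⟨he', h2⟩ h
      · rw [hmap e h1, Sym2.map_mk, hw, hup u' hu'] at h
        exact absurd h.symm (hmix u' hu' hadj' e)
      · rw [hmap e' h2, Sym2.map_mk, hw, hup u hu] at h
        exact absurd h (hmix u hu hadj e')
      · rw [Sym2.map_mk, Sym2.map_mk, hw, hup u hu, hup u' hu'] at h
        by_contra hne
        refine hχ (hGe hadj z hz) (hGe hadj' z hz) ?_ ⟨z, by simp, by simp⟩ h
        rw [Ne, Sym2.congr_right]
        exact fun h' ↦ hne (by rw [hf hu hu' h'])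

open scoped Classical in
theorem pow_le_card_clique_tuples (G : SimpleGraph V) (N : Finset V) {b q : ℝ} (hq : 0 ≤ q)
    (hb : ∀ x ∈ N, (#{y ∈ N | ¬ G.Adj x y} : ℝ) ≤ b) (k : ℕ)
    (hN : ∀ j < k, j * b + q ≤ #N) :
    q ^ k ≤ #{t ∈ Fintype.piFinset fun _ : Fin k ↦ N | ∀ i j, i ≠ j → G.Adj (t i) (t j)} := by
  induction k with
  | zero => simp
  | succ k ih =>
    set S := {t ∈ Fintype.piFinset fun _ : Fin k ↦ N | ∀ i j, i ≠ j → G.Adj (t i) (t j)} with hS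
    have ih' := ih fun j hj ↦ hN j (hj.trans k.lt_succ_self)
    have hext : ∀ t ∈ S, q ≤ #{y ∈ N | ∀ i, G.Adj (t i) y} := by
      intro t ht
      have htN := Fintype.mem_piFinset.1 (mem_filter.1 ht).1
      have hsub : N ⊆ {y ∈ N | ∀ i, G.Adj (t i) y} ∪
          univ.biUnion fun i ↦ {y ∈ N | ¬ G.Adj (t i) y} := by
        intro y hy
        by_cases h : ∀ i, G.Adj (t i) y
        · exact mem_union_left _ (mem_filter.2 ⟨hy, h⟩)
        · push Not at h
          obtain ⟨i, hi⟩ := h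
          exact mem_union_right _ (mem_biUnion.2 ⟨i, mem_univ _, mem_filter.2 ⟨hy, hi⟩⟩)
      have h1 : (#N : ℝ) ≤ #{y ∈ N | ∀ i, G.Adj (t i) y} +
          ∑ i, (#{y ∈ N | ¬ G.Adj (t i) y} : ℝ) := by
        exact_mod_cast (card_le_card hsub).trans
          ((card_union_le _ _).trans (add_le_add le_rfl card_biUnion_le))
      have h2 : ∑ i, (#{y ∈ N | ¬ G.Adj (t i) y} : ℝ) ≤ k * b := by
        refine (sum_le_sum fun i _ ↦ hb _ (htN i)).trans ?_
        simp
      linarith [hN k k.lt_succ_self]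
    have hcard : ∑ t ∈ S, #{y ∈ N | ∀ i, G.Adj (t i) y} ≤ #{t ∈ Fintype.piFinset
        fun _ : Fin (k + 1) ↦ N | ∀ i j, i ≠ j → G.Adj (t i) (t j)} := by
      rw [← card_sigma]
      refine card_le_card_of_injOn (fun p ↦ (Fin.cons p.2 p.1 : Fin (k + 1) → V)) ?_ ?_
      · rintro ⟨t, y⟩ hp
        simp only [coe_sigma, Set.mem_sigma_iff, mem_coe, mem_filter, hS] at hp
        simp only [mem_coe, mem_filter, Fintype.mem_piFinset]
        refine ⟨Fin.cases hp.2.1 (Fintype.mem_piFinset.1 hp.1.1), fun i j ↦ ?_⟩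
        cases i using Fin.cases <;> cases j using Fin.cases <;> intro hij
        · exact absurd rfl hij
        · simpa using (hp.2.2 _).symm
        · simpa using hp.2.2 _
        · simpa using hp.1.2 _ _ fun h ↦ hij (by rw [h])
      · rintro ⟨t, y⟩ _ ⟨t', y'⟩ _ h
        simp only [Fin.cons_inj] at h
        rw [h.1, h.2]
    calc q ^ (k + 1) = q ^ k * q := pow_succ ..
      _ ≤ #S * q := by gcongr
      _ = ∑ t ∈ S, q := by simp
      _ ≤ ∑ t ∈ S, (#{y ∈ N | ∀ i, G.Adj (t i) y} : ℝ) := sum_le_sum hext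
      _ ≤ _ := by exact_mod_cast hcard

end Embedding

section Step

open Finset

open scoped Classical in
theorem exists_cross_copy [Fintype W] {H : SimpleGraph W} {k : ℕ}
    (c : H.Coloring (Fin (k + 2))) {ε : ℝ} (hε : 0 < ε) : ∃ L : ℕ, 0 < L ∧
    ∀ {V : Type} {G : SimpleGraph V} {χ : Sym2 V → ℕ} (A R : Finset V),
      ProperEdgeColoring G χ → L ≤ #A → L ≤ #R →
      ε * (#A * (#R : ℝ) ^ (k + 1)) ≤ #{t ∈ Fintype.piFinset
        (Fin.cons A fun _ ↦ R : Fin (k + 2) → Finset V) | ∀ i j, i ≠ j → G.Adj (t i) (t j)} →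
      ∃ f : W → V, Function.Injective f ∧ (∀ ⦃a b⦄, H.Adj a b → G.Adj (f a) (f b)) ∧
        (∀ w, c w = 0 → f w ∈ A) ∧ (∀ w, c w ≠ 0 → f w ∈ R) ∧
        Set.InjOn χ (Sym2.map f '' H.edgeSet) := by
  obtain ⟨L, hL⟩ := exists_box_subset (k + 2)
    (Fintype.card W + Fintype.card W ^ 3 + 1) ε hε
  refine ⟨L + 1, L.succ_pos, fun {V G χ} A R hχ hA hR hD ↦ ?_⟩
  obtain ⟨X, hX, hXD⟩ := hL (Fin.cons A fun _ ↦ R) _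
    (Fin.cases (by simpa using by omega) fun i ↦ by simpa using by omega)
    (filter_subset _ _) (by simpa [Fin.prod_univ_succ (n := k + 1)] using hD)
  have hXne : ∀ i, (X i).Nonempty := fun i ↦ card_pos.1 (by rw [(hX i).2]; omega)
  choose g hg using hXne
  have hadj : ∀ i j, i ≠ j → ∀ x ∈ X i, ∀ y ∈ X j, G.Adj x y := by
    intro i j hij x hx y hy
    have ht : Function.update (Function.update g i x) j y ∈ Fintype.piFinset X := by
      refine Fintype.mem_piFinset.2 fun l ↦ ?_
      by_cases hlj : l = j
      · subst hlj
        simpa using hy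
      · rw [Function.update_of_ne hlj]
        by_cases hli : l = i
        · subst hli
          simpa using hx
        · rw [Function.update_of_ne hli]
          exact hg l
    have := (mem_filter.1 (hXD ht)).2 i j hij
    rwa [Function.update_self, Function.update_of_ne hij, Function.update_self] at this
  obtain ⟨f, hf, hfX, hfχ⟩ := exists_rainbow_embedding c hχ X
    (fun i ↦ by rw [(hX i).2]; exact Nat.lt_succ_self _) hadj
  refine ⟨f, hf, fun a b hab ↦ hadj _ _ (c.valid hab) _ (hfX a) _ (hfX b), fun w hw ↦ ?_,
    fun w hw ↦ ?_, hfχ⟩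
  · have := (hX (c w)).1 (hfX w)
    rw [hw] at this
    simpa using this
  · have := (hX (c w)).1 (hfX w)
    obtain ⟨i, hi⟩ := Fin.exists_succ_eq.2 hw
    rw [← hi] at this
    simpa using this

open scoped Classical in
theorem pow_le_card_clique_tuples_of_lost {G G' : SimpleGraph V} {S R : Finset V} (hR : R ⊆ S)
    (v : V) {k : ℕ} {η d M : ℝ} (hη : 0 < η) (hS : 0 < #S) (hdS : d ≤ #S)
    (hd : ∀ x ∈ R, d ≤ #{y ∈ S | G.Adj x y})
    (hM : ∑ x ∈ R, (#{y ∈ S | G.Adj x y ∧ ¬ G'.Adj x y} : ℝ) ≤ M)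
    (hMs : M * (k + 1) ≤ η ^ 2 * (#S : ℝ) ^ 2)
    (hv : k * (#S - d) + 3 * η * #S ≤ #{x ∈ R | G'.Adj v x}) :
    (η * #S) ^ (k + 1) ≤ #{t ∈ Fintype.piFinset fun _ : Fin (k + 1) ↦ {x ∈ R | G'.Adj v x} |
      ∀ i j, i ≠ j → G'.Adj (t i) (t j)} := by
  set s : ℝ := (#S : ℝ) with hs
  have hs0 : 0 < s := Nat.cast_pos.2 hS
  set lost : V → ℝ := fun x ↦ #{y ∈ S | G.Adj x y ∧ ¬ G'.Adj x y} with hlost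
  set e : ℝ := η / (k + 1) * s with he
  have he0 : 0 < e := by positivity
  set B := {x ∈ R | e < lost x} with hB
  have hBcard : (#B : ℝ) ≤ η * s := by
    have h1 : #B * e ≤ M := by
      calc #B * e = ∑ x ∈ B, e := by simp
        _ ≤ ∑ x ∈ B, lost x := sum_le_sum fun x hx ↦ (mem_filter.1 hx).2.le
        _ ≤ ∑ x ∈ R, lost x := sum_le_sum_of_subset_of_nonneg (filter_subset _ _)
          fun _ _ _ ↦ Nat.cast_nonneg _
        _ ≤ M := hM
    have h2 : #B * e * (k + 1) ≤ η * s * (η * s) := by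
      calc #B * e * (k + 1) ≤ M * (k + 1) := by gcongr
        _ ≤ _ := by linarith [hMs]
    have h3 : #B * e * (k + 1) = #B * (η * s) := by
      rw [he]
      field_simp
    rw [h3] at h2
    exact le_of_mul_le_mul_right h2 (by positivity)
  set N := {x ∈ R | G'.Adj v x ∧ lost x ≤ e} with hN
  have hNcard : k * (s - d) + 2 * η * s ≤ #N := by
    have hsub : {x ∈ R | G'.Adj v x} ⊆ N ∪ B := by
      intro x hx
      obtain ⟨hxR, hvx⟩ := mem_filter.1 hx
      by_cases h : lost x ≤ e
      · exact mem_union_left _ (mem_filter.2 ⟨hxR, hvx, h⟩)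
      · exact mem_union_right _ (mem_filter.2 ⟨hxR, not_le.1 h⟩)
    have : (#{x ∈ R | G'.Adj v x} : ℝ) ≤ #N + #B := by
      exact_mod_cast (card_le_card hsub).trans (card_union_le _ _)
    linarith
  have hb : ∀ x ∈ N, (#{y ∈ N | ¬ G'.Adj x y} : ℝ) ≤ s - d + e := by
    intro x hx
    obtain ⟨hxR, -, hxl⟩ := mem_filter.1 hx
    have hsub : {y ∈ N | ¬ G'.Adj x y} ⊆ {y ∈ S | ¬ G.Adj x y} ∪
        {y ∈ S | G.Adj x y ∧ ¬ G'.Adj x y} := by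
      intro y hy
      obtain ⟨hyN, hxy⟩ := mem_filter.1 hy
      have hyS := hR (mem_filter.1 hyN).1
      by_cases h : G.Adj x y
      · exact mem_union_right _ (mem_filter.2 ⟨hyS, h, hxy⟩)
      · exact mem_union_left _ (mem_filter.2 ⟨hyS, h⟩)
    have h1 : (#{y ∈ N | ¬ G'.Adj x y} : ℝ) ≤ #{y ∈ S | ¬ G.Adj x y} + lost x := by
      simp only [hlost]
      exact_mod_cast (card_le_card hsub).trans (card_union_le _ _)
    have h2 : (#{y ∈ S | G.Adj x y} : ℝ) + #{y ∈ S | ¬ G.Adj x y} = s := by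
      rw [hs]
      exact_mod_cast card_filter_add_card_filter_not (s := S) (fun y ↦ G.Adj x y)
    linarith [hd x hxR]
  have hke : k * e ≤ η * s := by
    rw [he, div_mul_eq_mul_div, mul_div_assoc', div_le_iff₀ (by positivity)]
    nlinarith [mul_pos hη hs0]
  refine (pow_le_card_clique_tuples G' N (by positivity) hb (k + 1) fun j hj ↦ ?_).trans ?_
  · have hj' : (j : ℝ) ≤ k := by exact_mod_cast Nat.lt_succ_iff.1 hj
    nlinarith [mul_le_mul_of_nonneg_right hj' (show 0 ≤ s - d + e by linarith)]
  · refine Nat.cast_le.2 (card_le_card (filter_subset_filter _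
      (Fintype.piFinset_subset _ _ fun _ ↦ ?_)))
    intro x hx
    obtain ⟨hxR, hvx, -⟩ := mem_filter.1 hx
    exact mem_filter.2 ⟨hxR, hvx⟩

open scoped Classical in
theorem le_card_clique_tuples_cons {G' : SimpleGraph V} (A R B : Finset V) (hB : B ⊆ A)
    {k : ℕ} {q : ℝ} (hq : ∀ v ∈ B, q ≤ #{t ∈ Fintype.piFinset
      fun _ : Fin (k + 1) ↦ {x ∈ R | G'.Adj v x} | ∀ i j, i ≠ j → G'.Adj (t i) (t j)}) :
    #B * q ≤ #{t ∈ Fintype.piFinset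
        (Fin.cons A fun _ ↦ R : Fin (k + 2) → Finset V) |
          ∀ i j, i ≠ j → G'.Adj (t i) (t j)} := by
  calc #B * q = ∑ v ∈ B, q := by simp
    _ ≤ ∑ v ∈ B, (#{t ∈ Fintype.piFinset
      fun _ : Fin (k + 1) ↦ {x ∈ R | G'.Adj v x} | ∀ i j, i ≠ j → G'.Adj (t i) (t j)} : ℝ) :=
      sum_le_sum hq
    _ ≤ _ := by
      rw [← Nat.cast_sum, ← card_sigma]
      refine Nat.cast_le.2 (card_le_card_of_injOn
        (fun p ↦ (Fin.cons p.1 p.2 : Fin (k + 2) → V)) ?_ ?_)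
      · rintro ⟨v, t⟩ hp
        simp only [coe_sigma, Set.mem_sigma_iff, mem_coe, mem_filter, Fintype.mem_piFinset] at hp
        simp only [mem_coe, mem_filter, Fintype.mem_piFinset]
        refine ⟨Fin.cases (by simpa using hB hp.1) fun i ↦ by simpa using (hp.2.1 i).1,
          fun i j ↦ ?_⟩
        cases i using Fin.cases <;> cases j using Fin.cases <;> intro hij
        · exact absurd rfl hij
        · simpa using (hp.2.1 _).2
        · simpa using (hp.2.1 _).2.symm
        · simpa using hp.2.2 _ _ fun h ↦ hij (by rw [h])
      · rintro ⟨v, t⟩ _ ⟨v', t'⟩ _ h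
        simp only [Fin.cons_inj] at h
        rw [h.1, h.2]

theorem exists_subset_card_eq_forall_le [DecidableEq V] (d : V → ℕ) (S : Finset V) (L : ℕ)
    (hL : L ≤ #S) : ∃ A ⊆ S, #A = L ∧ ∀ a ∈ A, ∀ x ∈ S \ A, d a ≤ d x := by
  induction L with
  | zero => exact ⟨∅, by simp⟩
  | succ L ih =>
    obtain ⟨A, hAS, hA, hd⟩ := ih (by omega)
    have hne : (S \ A).Nonempty := by
      rw [← card_pos, card_sdiff_of_subset hAS]
      omega
    obtain ⟨z, hz, hzmin⟩ := exists_min_image _ d hne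
    obtain ⟨hzS, hzA⟩ := mem_sdiff.1 hz
    refine ⟨insert z A, insert_subset hzS hAS, by rw [card_insert_of_notMem hzA, hA], ?_⟩
    intro a ha x hx
    have hx' : x ∈ S \ A := by
      simp only [mem_sdiff, mem_insert, not_or] at hx ⊢
      exact ⟨hx.1, hx.2.2⟩
    rcases mem_insert.1 ha with rfl | ha
    · exact hzmin x hx'
    · exact hd a ha x hx'

end Step

section Cross

open Finset

variable {k : ℕ} {H : SimpleGraph W}

/-- `f` embeds `H` into `G` as a rainbow copy, with the vertices of color `0` going to `A` and all
other vertices going to `R`. -/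
structure IsCrossEmbedding (c : H.Coloring (Fin (k + 2))) (G : SimpleGraph V) (χ : Sym2 V → ℕ)
    (A R : Finset V) (f : W → V) : Prop where
  injective : Function.Injective f
  map_adj : ∀ ⦃a b⦄, H.Adj a b → G.Adj (f a) (f b)
  mem_left : ∀ w, c w = 0 → f w ∈ A
  mem_right : ∀ w, c w ≠ 0 → f w ∈ R
  injOn : Set.InjOn χ (Sym2.map f '' H.edgeSet)

/-- A family of pairwise edge-disjoint rainbow copies of `H` given by cross embeddings. -/
def IsCrossPacking (c : H.Coloring (Fin (k + 2))) (G : SimpleGraph V) (χ : Sym2 V → ℕ)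
    (A R : Finset V) (𝒜 : Finset (Finset (Sym2 V))) : Prop :=
  (∀ P ∈ 𝒜, ∃ f, IsCrossEmbedding c G χ A R f ∧ (P : Set (Sym2 V)) = Sym2.map f '' H.edgeSet) ∧
    (𝒜 : Set (Finset (Sym2 V))).PairwiseDisjoint id

variable {c : H.Coloring (Fin (k + 2))} {G : SimpleGraph V} {χ : Sym2 V → ℕ} {A R S : Finset V}
  {𝒜 : Finset (Finset (Sym2 V))}

/-- The graph formed by the edges of `G` not covered by the family `𝒜`. -/
def surviving (G : SimpleGraph V) (𝒜 : Finset (Finset (Sym2 V))) : SimpleGraph V :=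
  G.deleteEdges {e | ∃ P ∈ 𝒜, e ∈ P}

theorem surviving_adj {a b : V} :
    (surviving G 𝒜).Adj a b ↔ G.Adj a b ∧ ¬ ∃ P ∈ 𝒜, s(a, b) ∈ P :=
  SimpleGraph.deleteEdges_adj

theorem surviving_le : surviving G 𝒜 ≤ G := SimpleGraph.deleteEdges_le _

theorem IsCrossPacking.isRainbowPacking (h : IsCrossPacking c G χ A R 𝒜) :
    IsRainbowPacking H G χ 𝒜 := by
  refine ⟨fun P hP ↦ ?_, h.2⟩
  obtain ⟨f, hf, hPf⟩ := h.1 P hP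
  exact ⟨⟨f, hf.injective, hf.map_adj, hPf⟩, hPf ▸ hf.injOn⟩

open scoped Classical in
theorem exists_maximal_isCrossPacking [Finite V] [Finite W] (hH : H ≠ ⊥)
    (c : H.Coloring (Fin (k + 2))) (G : SimpleGraph V) (χ : Sym2 V → ℕ) (A R : Finset V) :
    ∃ 𝒜, IsCrossPacking c G χ A R 𝒜 ∧
      ∀ f, ¬ IsCrossEmbedding c (surviving G 𝒜) χ A R f := by
  have := Fintype.ofFinite V
  obtain ⟨𝒜, h𝒜, hmax⟩ := exists_max_image
    ({𝒜 | IsCrossPacking c G χ A R 𝒜} : Finset (Finset (Finset (Sym2 V)))) card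
    ⟨∅, mem_filter.2 ⟨mem_univ _, by simp, by simp⟩⟩
  simp only [mem_filter, mem_univ, true_and] at h𝒜 hmax
  refine ⟨𝒜, h𝒜, fun f hf ↦ ?_⟩
  set P : Finset (Sym2 V) := ((Set.toFinite H.edgeSet).image (Sym2.map f)).toFinset with hP
  have hPc : (P : Set (Sym2 V)) = Sym2.map f '' H.edgeSet := by simp [hP]
  have hdisj : ∀ e ∈ P, ¬ ∃ Q ∈ 𝒜, e ∈ Q := by
    intro e he
    rw [← mem_coe, hPc] at he
    obtain ⟨e, he, rfl⟩ := he
    induction e with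
    | _ a b => exact (surviving_adj.1 (hf.map_adj he)).2
  have hne : P.Nonempty := by
    obtain ⟨a, b, hab⟩ := SimpleGraph.ne_bot_iff_exists_adj.1 hH
    rw [← coe_nonempty, hPc]
    exact ⟨_, s(a, b), hab, rfl⟩
  have hnot : P ∉ 𝒜 := fun h ↦ by
    obtain ⟨e, he⟩ := hne
    exact hdisj e he ⟨P, h, he⟩
  have hins : IsCrossPacking c G χ A R (insert P 𝒜) := by
    refine ⟨fun Q hQ ↦ ?_, ?_⟩
    · rcases mem_insert.1 hQ with rfl | hQ
      · exact ⟨f, ⟨hf.injective, fun a b hab ↦ surviving_le (hf.map_adj hab),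
          hf.mem_left, hf.mem_right, hf.injOn⟩, hPc⟩
      · exact h𝒜.1 Q hQ
    · rw [coe_insert]
      refine h𝒜.2.insert fun Q hQ _ ↦ ?_
      exact disjoint_left.2 fun e he heQ ↦ hdisj e he ⟨Q, hQ, heQ⟩
  have := hmax _ hins
  rw [card_insert_of_notMem hnot] at this
  omega

open scoped Classical in
theorem IsCrossPacking.mul_card_le (h : IsCrossPacking c G χ A R 𝒜)
    (hc : ∀ j : Fin (k + 2), j ≠ 0 → ∃ u v, H.Adj u v ∧ c u = 0 ∧ c v = j) :
    #𝒜 * (k + 1) ≤ ∑ v ∈ A, #{x ∈ R | G.Adj v x ∧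
      ¬ (surviving G 𝒜).Adj v x} := by
  have hpairs : ∀ P ∈ 𝒜, k + 1 ≤ #{p ∈ A ×ˢ R | s(p.1, p.2) ∈ P} := by
    intro P hP
    obtain ⟨f, hf, hPf⟩ := h.1 P hP
    choose u v huv hu hv using fun j : Fin (k + 1) ↦ hc j.succ (Fin.succ_ne_zero j)
    have : #(univ : Finset (Fin (k + 1))) ≤ _ :=
      card_le_card_of_injOn (t := {p ∈ A ×ˢ R | s(p.1, p.2) ∈ P})
        (fun j ↦ (f (u j), f (v j))) ?_ ?_
    · simpa using this
    · intro j _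
      simp only [mem_coe, mem_filter, mem_product]
      refine ⟨⟨hf.mem_left _ (hu j), hf.mem_right _ (by rw [hv]; exact Fin.succ_ne_zero j)⟩, ?_⟩
      rw [← mem_coe, hPf]
      exact ⟨s(u j, v j), huv j, rfl⟩
    · intro j _ j' _ hjj
      have := hf.injective (Prod.ext_iff.1 hjj).2
      exact Fin.succ_injective _ (by rw [← hv j, ← hv j', this])
  calc #𝒜 * (k + 1) = ∑ P ∈ 𝒜, (k + 1) := by simp
    _ ≤ ∑ P ∈ 𝒜, #{p ∈ A ×ˢ R | s(p.1, p.2) ∈ P} := sum_le_sum hpairs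
    _ = #(𝒜.biUnion fun P ↦ {p ∈ A ×ˢ R | s(p.1, p.2) ∈ P}) := by
      refine (card_biUnion fun P hP Q hQ hPQ ↦ ?_).symm
      refine disjoint_left.2 fun p hp hq ↦ ?_
      exact disjoint_left.1 (h.2 hP hQ hPQ) (mem_filter.1 hp).2 (mem_filter.1 hq).2
    _ ≤ #(A.sigma fun v ↦ {x ∈ R | G.Adj v x ∧
      ¬ (surviving G 𝒜).Adj v x}) := by
      refine card_le_card_of_injOn (fun p ↦ ⟨p.1, p.2⟩) ?_ ?_
      · rintro ⟨a, x⟩ hp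
        obtain ⟨P, hP, hp⟩ := mem_biUnion.1 (mem_coe.1 hp)
        obtain ⟨hp, heP⟩ := mem_filter.1 hp
        obtain ⟨ha, hx⟩ := mem_product.1 hp
        have hG : G.Adj a x := (h.isRainbowPacking.1 P hP).1.subset (mem_coe.2 heP)
        simp only [mem_coe, mem_sigma, mem_filter, surviving_adj]
        exact ⟨ha, hx, hG, fun hn ↦ hn.2 ⟨P, hP, heP⟩⟩
      · rintro ⟨a, x⟩ _ ⟨a', x'⟩ _ hh
        simpa using hh
    _ = _ := card_sigma _ _

open scoped Classical in
theorem sum_card_lost_le (G : SimpleGraph V) (R S : Finset V) (𝒜 : Finset (Finset (Sym2 V))) :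
    ∑ x ∈ R, #{y ∈ S | G.Adj x y ∧ ¬ (surviving G 𝒜).Adj x y} ≤ 2 * #(𝒜.biUnion id) := by
  rw [← card_sigma]
  refine card_le_mul_card_image_of_maps_to (f := fun p ↦ s(p.1, p.2)) ?_ 2 ?_
  · rintro ⟨x, y⟩ hp
    simp only [mem_sigma, mem_filter, surviving_adj] at hp
    by_contra hn
    exact hp.2.2.2 ⟨hp.2.2.1, fun ⟨P, hP, he⟩ ↦ hn (mem_biUnion.2 ⟨P, hP, he⟩)⟩
  · intro e _
    induction e with
    | _ a b =>
      refine (card_le_card (t := {⟨a, b⟩, ⟨b, a⟩}) ?_).trans card_le_two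
      rintro ⟨x, y⟩ hp
      have := (mem_filter.1 hp).2
      simp only [Sym2.eq_iff] at this
      rcases this with ⟨rfl, rfl⟩ | ⟨rfl, rfl⟩ <;> simp

theorem IsCrossPacking.card_biUnion_le [DecidableEq V] [Finite W]
    (h : IsCrossPacking c G χ A R 𝒜) : #(𝒜.biUnion id) ≤ #𝒜 * H.edgeSet.ncard := by
  refine card_biUnion_le_card_mul _ _ _ fun P hP ↦ ?_
  obtain ⟨f, -, hPf⟩ := h.1 P hP
  rw [id, ← Set.ncard_coe_finset, hPf]
  exact Set.ncard_image_le

open scoped Classical in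
theorem add_sum_le_of_few_exceptions (hk : 1 ≤ k) (A B : Finset V) (hBA : B ⊆ A) {L : ℕ}
    (hA : #A = L) {η s q : ℝ} {d n l : V → ℝ} (hη : 0 ≤ η) (hs : 0 ≤ s) (hds : ∀ v, d v ≤ s)
    (hl0 : ∀ v, 0 ≤ l v) (hnl : ∀ v, n v + l v ≤ d v)
    (hq : q * (k + 1) ≤ ∑ v ∈ A, l v) (hB : (#B : ℝ) ≤ η * L)
    (hn : ∀ v ∈ A, v ∉ B → n v ≤ k * (s - d v) + 3 * η * s) :
    q + ∑ v ∈ A, n v ≤ (k / (k + 1) : ℝ) * L * s + 4 * η * L * s := by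
  have hk' : (1 : ℝ) ≤ k := by exact_mod_cast hk
  have hpt : ∀ v ∈ A, d v + k * n v ≤ (k * s + 3 * η * s) + if v ∈ B then s else 0 := by
    intro v hv
    have hnd : n v ≤ d v := by linarith [hnl v, hl0 v]
    split_ifs with h
    · have h1 : k * n v ≤ k * s := by gcongr; exact hnd.trans (hds v)
      have h2 : 0 ≤ 3 * η * s := by positivity
      linarith [hds v]
    · nlinarith [hn v hv h]
  have hsum : (q + ∑ v ∈ A, n v) * (k + 1) ≤ L * (k * s + 3 * η * s) + η * L * s := by
    calc (q + ∑ v ∈ A, n v) * (k + 1) ≤ ∑ v ∈ A, (l v + n v + k * n v) := by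
          rw [sum_add_distrib, sum_add_distrib, ← mul_sum]
          linarith
      _ ≤ ∑ v ∈ A, (d v + k * n v) := sum_le_sum fun v _ ↦ by linarith [hnl v]
      _ ≤ ∑ v ∈ A, ((k * s + 3 * η * s) + if v ∈ B then s else 0) := sum_le_sum hpt
      _ = L * (k * s + 3 * η * s) + #B * s := by
        rw [sum_add_distrib, sum_ite_mem, inter_eq_right.2 hBA]
        simp [hA]
        ring
      _ ≤ _ := by gcongr
  have hfin : ((k / (k + 1) : ℝ) * L * s + 4 * η * L * s) * (k + 1) =
      L * (k * s) + 4 * η * L * s * (k + 1) := by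
    field_simp
  refine le_of_mul_le_mul_right (hsum.trans ?_) (show (0 : ℝ) < k + 1 by positivity)
  rw [hfin]
  have : 0 ≤ η * L * s := by positivity
  nlinarith

open scoped Classical in
/-- The edges of `G` meeting `A` that survive a maximal cross packing, together with the members
of the packing, are few. -/
theorem exists_isCrossPacking_cost_le [Fintype W] (hk : 1 ≤ k) (hH : H ≠ ⊥)
    (c : H.Coloring (Fin (k + 2)))
    (hc : ∀ j : Fin (k + 2), j ≠ 0 → ∃ u v, H.Adj u v ∧ c u = 0 ∧ c v = j)
    {η : ℝ} (hη : 0 < η) : ∃ L : ℕ, 0 < L ∧ ∃ N : ℕ, ∀ {V : Type} [Finite V]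
      {G : SimpleGraph V} {χ : Sym2 V → ℕ} (S A : Finset V), ProperEdgeColoring G χ →
      N ≤ #S → A ⊆ S → #A = L →
      (∀ a ∈ A, ∀ x ∈ S \ A, #{y ∈ S | G.Adj a y} ≤ #{y ∈ S | G.Adj x y}) →
      ∃ 𝒜, IsCrossPacking c G χ A (S \ A) 𝒜 ∧
        (#𝒜 : ℝ) + ∑ v ∈ A, (#{x ∈ S \ A |
          (surviving G 𝒜).Adj v x} : ℝ) ≤
          (k / (k + 1) : ℝ) * L * #S + 4 * η * L * #S := by
  obtain ⟨L, hL0, hL⟩ := exists_cross_copy c (ε := η ^ (k + 2)) (by positivity)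
  set m := H.edgeSet.ncard with hm
  refine ⟨L, hL0, max (2 * L) ⌈2 * m * L * (k + 1) / η ^ 2⌉₊,
    fun {V _ G χ} S A hχ hN hAS hA hdeg ↦ ?_⟩
  obtain ⟨𝒜, h𝒜, hmax⟩ := exists_maximal_isCrossPacking hH c G χ A (S \ A)
  refine ⟨𝒜, h𝒜, ?_⟩
  set R := S \ A with hR
  set G' := surviving G 𝒜 with hG'
  have hG'G : G' ≤ G := surviving_le
  have hRS : R ⊆ S := sdiff_subset
  have hRcard : #R + L = #S := by
    rw [hR, ← hA, card_sdiff_add_card_eq_card hAS]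
  set s : ℝ := (#S : ℝ) with hs
  have hs0 : 0 < #S := by omega
  have hs0' : 0 < s := Nat.cast_pos.2 hs0
  have hsN : 2 * m * L * (k + 1) ≤ η ^ 2 * s := by
    have h1 : (2 * m * L * (k + 1) / η ^ 2 : ℝ) ≤ s :=
      (Nat.le_ceil _).trans (Nat.cast_le.2 ((le_max_right _ _).trans hN))
    rwa [div_le_iff₀ (by positivity), mul_comm s] at h1
  set d : V → ℝ := fun v ↦ #{y ∈ S | G.Adj v y} with hd
  set n' : V → ℝ := fun v ↦ #{x ∈ R | G'.Adj v x} with hn'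
  set l : V → ℝ := fun v ↦ #{x ∈ R | G.Adj v x ∧ ¬ G'.Adj v x} with hl
  have hds : ∀ v, d v ≤ s := fun v ↦ Nat.cast_le.2 (card_filter_le _ _)
  have hnl : ∀ v, n' v + l v ≤ d v := by
    intro v
    have h1 : #{x ∈ R | G'.Adj v x} + #{x ∈ R | G.Adj v x ∧ ¬ G'.Adj v x} ≤
        #{y ∈ S | G.Adj v y} := by
      rw [← card_union_of_disjoint]
      · refine card_le_card (union_subset (fun x hx ↦ ?_) fun x hx ↦ ?_)
        · exact mem_filter.2 ⟨hRS (mem_filter.1 hx).1, hG'G (mem_filter.1 hx).2⟩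
        · exact mem_filter.2 ⟨hRS (mem_filter.1 hx).1, (mem_filter.1 hx).2.1⟩
      · exact disjoint_left.2 fun x hx hx' ↦ (mem_filter.1 hx').2.2 (mem_filter.1 hx).2
    simp only [hn', hl, hd]
    exact_mod_cast h1
  have hl0 : ∀ v, 0 ≤ l v := fun v ↦ Nat.cast_nonneg _
  have hcard : (#𝒜 : ℝ) * (k + 1) ≤ ∑ v ∈ A, l v := by
    simp only [hl]
    exact_mod_cast h𝒜.mul_card_le hc
  have hn0 : ∀ v, 0 ≤ n' v := fun v ↦ Nat.cast_nonneg _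
  have hcardLs : (#𝒜 : ℝ) ≤ L * s := by
    have h1 : ∑ v ∈ A, l v ≤ L * s := by
      calc ∑ v ∈ A, l v ≤ ∑ v ∈ A, s :=
            sum_le_sum fun v _ ↦ by linarith [hnl v, hds v, hn0 v]
        _ = L * s := by simp [hA]
    nlinarith [(Nat.cast_nonneg #𝒜 : (0 : ℝ) ≤ #𝒜), (Nat.cast_nonneg k : (0 : ℝ) ≤ k)]
  have hlost : ∑ x ∈ R, (#{y ∈ S | G.Adj x y ∧ ¬ G'.Adj x y} : ℝ) ≤ 2 * m * L * s := by
    have h1 : ∑ x ∈ R, (#{y ∈ S | G.Adj x y ∧ ¬ G'.Adj x y} : ℝ) ≤ 2 * (#𝒜 * m) := by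
      exact_mod_cast (sum_card_lost_le G R S 𝒜).trans
        (Nat.mul_le_mul_left 2 h𝒜.card_biUnion_le)
    nlinarith [mul_le_mul_of_nonneg_right hcardLs (Nat.cast_nonneg m : (0 : ℝ) ≤ m)]
  set B := {v ∈ A | k * (s - d v) + 3 * η * s < n' v} with hB
  have hBcard : (#B : ℝ) ≤ η * L := by
    by_contra! hcon
    have hq : ∀ v ∈ B, (η * s) ^ (k + 1) ≤ #{t ∈ Fintype.piFinset
        fun _ : Fin (k + 1) ↦ {x ∈ R | G'.Adj v x} | ∀ i j, i ≠ j → G'.Adj (t i) (t j)} := by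
      intro v hv
      obtain ⟨hvA, hv⟩ := mem_filter.1 hv
      refine pow_le_card_clique_tuples_of_lost (G := G) hRS v hη hs0 (hds v)
        (fun x hx ↦ Nat.cast_le.2 (hdeg v hvA x hx)) hlost ?_ hv.le
      nlinarith [mul_le_mul_of_nonneg_right hsN hs0'.le]
    have hD := le_card_clique_tuples_cons A R B (filter_subset _ _) hq
    have hRs : (#R : ℝ) ≤ s := Nat.cast_le.2 (card_le_card hRS)
    have hdense : η ^ (k + 2) * (#A * (#R : ℝ) ^ (k + 1)) ≤ #B * (η * s) ^ (k + 1) := by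
      calc η ^ (k + 2) * (#A * (#R : ℝ) ^ (k + 1))
          ≤ η ^ (k + 2) * (L * s ^ (k + 1)) := by rw [hA]; gcongr
        _ = η * L * (η * s) ^ (k + 1) := by ring
        _ ≤ _ := by gcongr
    obtain ⟨f, hf1, hf2, hf3, hf4, hf5⟩ := hL (G := G') (χ := χ) A R
      (fun e f he hf ↦ hχ (SimpleGraph.edgeSet_mono hG'G he) (SimpleGraph.edgeSet_mono hG'G hf))
      hA.ge (by omega) (hdense.trans hD)
    exact hmax f ⟨hf1, hf2, hf3, hf4, hf5⟩
  exact add_sum_le_of_few_exceptions hk A B (filter_subset _ _) hA hη.le hs0'.le hds hl0 hnl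
    hcard hBcard fun v hv hvB ↦ not_lt.1 fun hlt ↦ hvB (mem_filter.2 ⟨hv, hlt⟩)

end Cross

section Main

open Finset

theorem edgeSet_ncard_le_sq {G : SimpleGraph V} {S : Finset V}
    (hS : ∀ ⦃x y⦄, G.Adj x y → x ∈ S ∧ y ∈ S) : G.edgeSet.ncard ≤ #S ^ 2 := by
  classical
  have hsub : G.edgeSet ⊆ ((S ×ˢ S).image fun p ↦ s(p.1, p.2) : Finset (Sym2 V)) := by
    intro e he
    induction e with
    | _ a b =>
      rw [mem_coe, mem_image]
      exact ⟨(a, b), mem_product.2 (hS he), rfl⟩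
  refine (Set.ncard_le_ncard hsub (finite_toSet _)).trans ?_
  rw [Set.ncard_coe_finset, sq, ← card_product]
  exact card_image_le

open scoped Classical in
theorem ncard_uncovered_union_le [Finite V] {G : SimpleGraph V} {S A : Finset V}
    (hS : ∀ ⦃x y⦄, G.Adj x y → x ∈ S ∧ y ∈ S) (𝒜 ℬ : Finset (Finset (Sym2 V))) :
    (uncovered G (𝒜 ∪ ℬ)).ncard ≤
      (uncovered ((surviving G 𝒜).deleteEdges {e | ∃ v ∈ e, v ∈ A}) ℬ).ncard +
        (#A ^ 2 + ∑ v ∈ A, #{x ∈ S \ A | (surviving G 𝒜).Adj v x}) := by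
  set E := (A ×ˢ A).image (fun p ↦ s(p.1, p.2)) ∪
    (A.sigma fun v ↦ {x ∈ S \ A | (surviving G 𝒜).Adj v x}).image (fun p ↦ s(p.1, p.2)) with hE
  have hEcard : #E ≤ #A ^ 2 + ∑ v ∈ A, #{x ∈ S \ A | (surviving G 𝒜).Adj v x} := by
    refine (card_union_le _ _).trans (add_le_add (card_image_le.trans ?_)
      (card_image_le.trans (card_sigma _ _).le))
    rw [card_product, sq]
  have hmem : ∀ a b, a ∈ A → (surviving G 𝒜).Adj a b → s(a, b) ∈ E := by
    intro a b ha hab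
    by_cases hb : b ∈ A
    · exact mem_union_left _ (mem_image.2 ⟨(a, b), mem_product.2 ⟨ha, hb⟩, rfl⟩)
    · refine mem_union_right _ (mem_image.2 ⟨⟨a, b⟩, mem_sigma.2 ⟨ha, mem_filter.2 ⟨?_, hab⟩⟩, rfl⟩)
      exact mem_sdiff.2 ⟨(hS (surviving_le hab)).2, hb⟩
  have hsub : uncovered G (𝒜 ∪ ℬ) ⊆
      uncovered ((surviving G 𝒜).deleteEdges {e | ∃ v ∈ e, v ∈ A}) ℬ ∪ E := by
    rintro e ⟨he, hcov⟩
    induction e with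
    | _ a b =>
      have hab : (surviving G 𝒜).Adj a b :=
        surviving_adj.2 ⟨he, fun ⟨P, hP, hPe⟩ ↦ hcov P (mem_union_left _ hP) hPe⟩
      by_cases ha : a ∈ A
      · exact Or.inr (hmem a b ha hab)
      by_cases hb : b ∈ A
      · exact Or.inr (Sym2.eq_swap ▸ hmem b a hb hab.symm)
      refine Or.inl ⟨SimpleGraph.deleteEdges_adj.2 ⟨hab, ?_⟩,
        fun P hP ↦ hcov P (mem_union_right _ hP)⟩
      rintro ⟨v, hv, hvA⟩
      rcases Sym2.mem_iff.1 hv with rfl | rfl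
      · exact ha hvA
      · exact hb hvA
  refine (Set.ncard_le_ncard hsub).trans ((Set.ncard_union_le _ _).trans ?_)
  rw [Set.ncard_coe_finset]
  exact Nat.add_le_add_left hEcard _

theorem exists_isRainbowPacking_cost_le [Fintype W] {H : SimpleGraph W} {k : ℕ} (hk : 1 ≤ k)
    (hH : H ≠ ⊥) (c : H.Coloring (Fin (k + 2)))
    (hc : ∀ j : Fin (k + 2), j ≠ 0 → ∃ u v, H.Adj u v ∧ c u = 0 ∧ c v = j)
    {α : ℝ} (hα : 0 < α) : ∃ N : ℕ, ∀ {V : Type} [Finite V] {χ : Sym2 V → ℕ} (S : Finset V)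
      (G : SimpleGraph V), ProperEdgeColoring G χ → (∀ ⦃x y⦄, G.Adj x y → x ∈ S ∧ y ∈ S) →
      ∃ 𝒜, IsRainbowPacking H G χ 𝒜 ∧ (#𝒜 : ℝ) + (uncovered G 𝒜).ncard ≤
        (k / (k + 1) : ℝ) * #S ^ 2 / 2 + α * #S ^ 2 + N * #S := by
  classical
  obtain ⟨L, hL0, N, hN⟩ := exists_isCrossPacking_cost_le hk hH c hc
    (show 0 < α / 4 by positivity)
  refine ⟨max N (2 * L), fun {V _ χ} S ↦ ?_⟩
  set N₁ := max N (2 * L) with hN₁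
  have hlam0 : (0 : ℝ) ≤ k / (k + 1) := by positivity
  have hlam1 : (k / (k + 1) : ℝ) ≤ 1 := by
    rw [div_le_one (by positivity)]
    linarith
  set lam : ℝ := k / (k + 1) with hlam
  induction S using Finset.strongInduction with
  | H S ih =>
  intro G hχ hS
  by_cases hsN : #S < N₁
  · refine ⟨∅, isRainbowPacking_empty _ _ _, ?_⟩
    have h1 : (uncovered G ∅).ncard ≤ N₁ * #S := by
      calc (uncovered G ∅).ncard = G.edgeSet.ncard := by simp [uncovered]
        _ ≤ #S ^ 2 := edgeSet_ncard_le_sq hS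
        _ ≤ N₁ * #S := by nlinarith
    have h2 : ((uncovered G ∅).ncard : ℝ) ≤ N₁ * #S := by exact_mod_cast h1
    have h3 : 0 ≤ lam * (#S : ℝ) ^ 2 / 2 + α * (#S : ℝ) ^ 2 := by positivity
    simp only [card_empty, Nat.cast_zero, zero_add]
    linarith
  · push Not at hsN
    have hLS : 2 * L ≤ #S := (le_max_right _ _).trans hsN
    obtain ⟨A, hAS, hA, hdeg⟩ := exists_subset_card_eq_forall_le
      (fun v ↦ #{y ∈ S | G.Adj v y}) S L (by omega)
    obtain ⟨𝒜, h𝒜, hcost⟩ := hN S A hχ ((le_max_left _ _).trans hsN) hAS hA hdeg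
    set G' := (surviving G 𝒜).deleteEdges {e | ∃ v ∈ e, v ∈ A} with hG'
    have hG'G : G' ≤ G := (SimpleGraph.deleteEdges_le _).trans surviving_le
    have hG'S : ∀ ⦃x y⦄, G'.Adj x y → x ∈ S \ A ∧ y ∈ S \ A := by
      intro x y hxy
      obtain ⟨hx, hy⟩ := hS (hG'G hxy)
      have := (SimpleGraph.deleteEdges_adj.1 hxy).2
      exact ⟨mem_sdiff.2 ⟨hx, fun h ↦ this ⟨x, by simp, h⟩⟩,
        mem_sdiff.2 ⟨hy, fun h ↦ this ⟨y, by simp, h⟩⟩⟩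
    have hss : S \ A ⊂ S := by
      refine sdiff_ssubset hAS (card_pos.1 (by omega))
    obtain ⟨ℬ, hℬ, hcostℬ⟩ := ih (S \ A) hss G' (fun e f he hf ↦
      hχ (SimpleGraph.edgeSet_mono hG'G he) (SimpleGraph.edgeSet_mono hG'G hf)) hG'S
    refine ⟨𝒜 ∪ ℬ, ⟨?_, ?_⟩, ?_⟩
    · intro P hP
      rcases mem_union.1 hP with hP | hP
      · exact h𝒜.isRainbowPacking.1 P hP
      · exact ⟨(hℬ.1 P hP).1.mono hG'G, (hℬ.1 P hP).2⟩
    · rw [coe_union]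
      refine h𝒜.2.union hℬ.2 fun P hP Q hQ _ ↦ disjoint_left.2 fun e heP heQ ↦ ?_
      have he : e ∈ (surviving G 𝒜).edgeSet :=
        SimpleGraph.edgeSet_mono (SimpleGraph.deleteEdges_le _)
          ((hℬ.1 Q hQ).1.subset (mem_coe.2 heQ))
      induction e with
      | _ a b => exact (surviving_adj.1 he).2 ⟨P, hP, heP⟩
    · have h1 : ((uncovered G (𝒜 ∪ ℬ)).ncard : ℝ) ≤ (uncovered G' ℬ).ncard +
          ((#A : ℝ) ^ 2 + ∑ v ∈ A, (#{x ∈ S \ A | (surviving G 𝒜).Adj v x} : ℝ)) := by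
        exact_mod_cast ncard_uncovered_union_le hS 𝒜 ℬ
      have h2 : (#(𝒜 ∪ ℬ) : ℝ) ≤ #𝒜 + #ℬ := by exact_mod_cast card_union_le _ _
      have h3 : (#(S \ A) : ℝ) = #S - L := by
        rw [card_sdiff_of_subset hAS, hA, Nat.cast_sub (by omega)]
      rw [h3] at hcostℬ
      rw [hA] at h1
      have h4 : (2 * L : ℝ) ≤ N₁ := by exact_mod_cast le_max_right N (2 * L)
      have h5 : (2 * L : ℝ) ≤ #S := by exact_mod_cast hLS
      have hL0' : (0 : ℝ) ≤ L := Nat.cast_nonneg L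
      have h6 : 0 ≤ (N₁ - 2 * L) * (L : ℝ) := mul_nonneg (by linarith) hL0'
      have h7 : 0 ≤ α * L * (#S - L) := mul_nonneg (by positivity) (by linarith)
      have h8 : 0 ≤ (1 - lam) * (L : ℝ) ^ 2 := mul_nonneg (by linarith) (by positivity)
      nlinarith

theorem phiRmax_le [Fintype W] {H : SimpleGraph W} {k : ℕ} (hk : 1 ≤ k)
    (hH : H.Colorable (k + 2)) (hH' : ¬ H.Colorable (k + 1)) {α : ℝ} (hα : 0 < α) :
    ∃ N : ℕ, ∀ n : ℕ, (phiRmax n H : ℝ) ≤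
      (k / (k + 1) : ℝ) * n ^ 2 / 2 + α * n ^ 2 + N * n := by
  obtain ⟨c⟩ := hH
  have hbot : H ≠ ⊥ := by
    obtain ⟨u, v, huv, -⟩ := exists_adj_zero_of_not_colorable hH' c (j := 1) (by simp)
    exact SimpleGraph.ne_bot_iff_exists_adj.2 ⟨u, v, huv⟩
  obtain ⟨N, hN⟩ := exists_isRainbowPacking_cost_le hk hbot c
    (fun j hj ↦ exists_adj_zero_of_not_colorable hH' c hj) hα
  refine ⟨N, fun n ↦ ?_⟩
  obtain ⟨G, χ, hχ, hG⟩ := exists_phiR_eq_phiRmax n H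
  obtain ⟨𝒜, h𝒜, hcost⟩ := hN univ G hχ (by simp)
  rw [← hG]
  have : (phiR G H χ : ℝ) ≤ #𝒜 + (uncovered G 𝒜).ncard := by
    exact_mod_cast phiR_le_of_isRainbowPacking h𝒜
  simpa using this.trans hcost

end Main

theorem stmt16 {W : Type*} [Fintype W] (H : SimpleGraph W)
    (hχH : 3 ≤ H.chromaticNumber) (δ : ℝ) (hδ : 0 < δ) :
    ∃ n₀ : ℕ, ∀ n : ℕ, n₀ ≤ n →
      exNum n H ≤ phiRmax n H ∧
      (phiRmax n H : ℝ) ≤ (exNum n H : ℝ) + δ * (n : ℝ) ^ 2 := by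
  obtain ⟨r, hr⟩ := ENat.ne_top_iff_exists.1
    (SimpleGraph.chromaticNumber_ne_top_iff_exists.2 ⟨_, H.colorable_of_fintype⟩)
  have hr3 : 3 ≤ r := by
    rw [← hr] at hχH
    exact_mod_cast hχH
  obtain ⟨k, rfl⟩ : ∃ k, r = k + 2 := ⟨r - 2, by omega⟩
  have hcol : H.Colorable (k + 2) :=
    SimpleGraph.chromaticNumber_le_iff_colorable.1 (by rw [← hr])
  have hncol : ¬ H.Colorable (k + 1) := fun h ↦ by
    have h1 := SimpleGraph.chromaticNumber_le_iff_colorable.2 h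
    rw [← hr] at h1
    have : k + 2 ≤ k + 1 := by exact_mod_cast h1
    omega
  have hbot : H ≠ ⊥ := by
    obtain ⟨c⟩ := hcol
    obtain ⟨u, v, huv, -⟩ := exists_adj_zero_of_not_colorable hncol c (j := 1) (by simp)
    exact SimpleGraph.ne_bot_iff_exists_adj.2 ⟨u, v, huv⟩
  obtain ⟨N, hN⟩ := phiRmax_le (by omega) hcol hncol (half_pos hδ)
  refine ⟨⌈2 * (N + (k + 1) ^ 2) / δ⌉₊ + 1, fun n hn ↦ ⟨exNum_le_phiRmax n H hbot, ?_⟩⟩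
  have h1 := hN n
  have h2 := turan_le_exNum k hncol n
  have h3 : (2 * (N + (k + 1) ^ 2) / δ : ℝ) ≤ n :=
    (Nat.le_ceil _).trans (by exact_mod_cast (Nat.le_succ _).trans hn)
  rw [div_le_iff₀ hδ] at h3
  have h4 : (1 : ℝ) ≤ n := by exact_mod_cast (Nat.le_add_left _ _).trans hn
  have h5 : (k + 1 : ℝ) ^ 2 ≤ (k + 1) ^ 2 * n := by
    have : (0 : ℝ) ≤ (k + 1) ^ 2 := by positivity
    nlinarith
  nlinarith [mul_le_mul_of_nonneg_right h3 (by linarith : (0 : ℝ) ≤ n)]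

end RainbowDecomp
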